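/- Let n ≥ 2 be an integer, Γ = ℝ × {0, 1, …, n−1}, and let Λ ⊂ ℝ² be a closed set that is 2-periodic with respect to the second variable. If (Γ, Λ) is a Heisenberg uniqueness pair, then for every k with 1 ≤ k ≤ n−1 there is no nonempty open interval J ⊂ ℝ such that Π(Λ) ∩ J is nonempty and Π(Λ) ∩ J ⊂ Π^{k*}_{ne}(Λ). -/

import Mathlib

open MeasureTheory Complex

/-- Fourier transform with the convention `f̂(ξ) = ∫ e^{πixξ} f(x) dx`. -/
noncomputable def FT (f : ℝ → ℂ) (ξ : ℝ) : ℂ :=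
  ∫ x : ℝ, Complex.exp (Real.pi * Complex.I * x * ξ) * f x

/-- `e^{πiη}`. -/
noncomputable def cexpEta (η : ℝ) : ℂ := Complex.exp (Real.pi * Complex.I * η)

/-- `Λ` is 2-periodic with respect to the second variable. -/
def Periodic2 (Λ : Set (ℝ × ℝ)) : Prop :=
  ∀ ξ η : ℝ, (ξ, η) ∈ Λ ↔ (ξ, η + 2) ∈ Λ

/-- The projection `Π(Λ)` of `Λ` on the x-axis. -/
def proj (Λ : Set (ℝ × ℝ)) : Set ℝ := {ξ | ∃ η : ℝ, (ξ, η) ∈ Λ}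

/-- `Img(ξ) = {η ∈ [0,2) : (ξ,η) ∈ Λ}`. -/
def Img (Λ : Set (ℝ × ℝ)) (ξ : ℝ) : Set ℝ := {η | η ∈ Set.Ico (0 : ℝ) 2 ∧ (ξ, η) ∈ Λ}

/-- `Π^k(Λ)` for `k < n`: points of `Π(Λ)` whose `Img` has exactly `k` elements. -/
def projExact (Λ : Set (ℝ × ℝ)) (k : ℕ) : Set ℝ :=
  {ξ | ξ ∈ proj Λ ∧ (Img Λ ξ).encard = k}

/-- `Π^n(Λ)`: points of `Π(Λ)` whose `Img` has at least `n` elements. -/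
def projAtLeast (Λ : Set (ℝ × ℝ)) (n : ℕ) : Set ℝ :=
  {ξ | ξ ∈ proj Λ ∧ (n : ℕ∞) ≤ (Img Λ ξ).encard}

/-- `ψ ∈ P^{E,ξ}_l` : there are an open interval `I ∋ ξ` and `φ_1,…,φ_{l-1} ∈ L¹(ℝ)` with
`φ̂_1 + φ̂_2 ψ + ⋯ + φ̂_{l-1} ψ^{l-2} + ψ^{l-1} = 0` on `I ∩ E`. -/
def Pmem (E : Set ℝ) (ξ : ℝ) (l : ℕ) (ψ : ℝ → ℂ) : Prop :=
  ∃ a b : ℝ, ξ ∈ Set.Ioo a b ∧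
    ∃ φ : Fin (l - 1) → ℝ → ℂ, (∀ i, Integrable (φ i)) ∧
      ∀ x ∈ Set.Ioo a b ∩ E,
        (∑ i : Fin (l - 1), FT (φ i) x * ψ x ^ (i : ℕ)) + ψ x ^ (l - 1) = 0

/-- `Π^{1*}(Λ)`: those `ξ ∈ Π^1(Λ)` such that `χ ∈ P^{Π^1(Λ),ξ}_n`, where
`χ(ξ') = e^{πiη}` with `η` the unique element of `Img(ξ')`. -/
def projOneStar (Λ : Set (ℝ × ℝ)) (n : ℕ) : Set ℝ :=
  {ξ | ξ ∈ projExact Λ 1 ∧ ∃ χ : ℝ → ℂ,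
    (∀ ξ' ∈ projExact Λ 1, ∀ η ∈ Img Λ ξ', χ ξ' = cexpEta η) ∧
    Pmem (projExact Λ 1) ξ n χ}

/-- `Π^{k*}_{su}(Λ)`. -/
def projStarSu (Λ : Set (ℝ × ℝ)) (n k : ℕ) : Set ℝ :=
  {ξ | ξ ∈ projExact Λ k ∧ ∃ a b : ℝ, ξ ∈ Set.Ioo a b ∧
    ∃ φ : Fin (n - 1) → ℝ → ℂ, (∀ i, Integrable (φ i)) ∧
      ∀ ξ' ∈ Set.Ioo a b ∩ projExact Λ k, ∀ η ∈ Img Λ ξ',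
        (∑ i : Fin (n - 1), FT (φ i) ξ' * cexpEta η ^ (i : ℕ)) = -(cexpEta η ^ (n - 1))}

/-- `Π^{k*}_{ne}(Λ)` for `k ≥ 2`. -/
def projStarNe (Λ : Set (ℝ × ℝ)) (k : ℕ) : Set ℝ :=
  {ξ | ξ ∈ projExact Λ k ∧ ∃ a b : ℝ, ξ ∈ Set.Ioo a b ∧
    ∃ φ : Fin k → ℝ → ℂ, (∀ i, Integrable (φ i)) ∧
      ∀ ξ' ∈ Set.Ioo a b ∩ projExact Λ k, ∀ η ∈ Img Λ ξ',
        (∑ i : Fin k, FT (φ i) ξ' * cexpEta η ^ (i : ℕ)) = -(cexpEta η ^ k)}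

/-- `(Γ, Λ)` with `Γ = ℝ × {0,…,n-1}` is a Heisenberg uniqueness pair: every admissible
measure `μ = Σ_m (x ↦ (x,m))_*(f_m dx)` (with each `f_m ∈ L¹(ℝ)`) whose Fourier transform
`μ̂(ξ,η) = Σ_m e^{mπiη} f̂_m(ξ)` vanishes on `Λ` must be zero, i.e. each `f_m = 0` a.e. -/
def IsHUP (n : ℕ) (Λ : Set (ℝ × ℝ)) : Prop :=
  ∀ f : Fin n → ℝ → ℂ, (∀ m, Integrable (f m)) →
    (∀ ξ η : ℝ, (ξ, η) ∈ Λ → ∑ m : Fin n, cexpEta η ^ (m : ℕ) * FT (f m) ξ = 0) →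
    ∀ m, f m =ᵐ[volume] (0 : ℝ → ℂ)

/-- `Π^{k*}_{ne}(Λ)` including the convention `Π^{1*}_{ne}(Λ) := Π^{1*}(Λ)`. -/
def projStarNeGen (Λ : Set (ℝ × ℝ)) (n k : ℕ) : Set ℝ :=
  if k = 1 then projOneStar Λ n else projStarNe Λ k

open Filter Topology
open scoped FourierTransform Convolution SchwartzMap

/-!
Let `ξ₀` be a starred point near which every point of `Π(Λ)` lies in `Π^k(Λ)`. The relation at `ξ₀`
is then a monic polynomial relation `φ̂_1 + ⋯ + φ̂_d χ^{d-1} + χ^d = 0`, `χ = e^{πiη}`, of degree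
`d < n`, valid at all points `(ξ, η)` of `Λ` with `ξ` near `ξ₀`. Choose `g ∈ L¹(ℝ)` whose transform
is a bump at `ξ₀` supported in this neighbourhood. Multiplying the relation by `ĝ` makes it hold on
all of `Λ`, and turns its coefficients into the transforms of `φ_1 ∗ g, …, φ_d ∗ g, g`. These are
the densities of an admissible measure that is nonzero, since `ĝ(ξ₀) = 1`, although its transform
vanishes on `Λ`.
-/

section FourierTransform

variable {f g : ℝ → ℂ}

lemma FT_eq_fourier (f : ℝ → ℂ) (ξ : ℝ) : FT f ξ = 𝓕 f (-ξ / 2) := by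
  simp only [FT, Real.fourier_real_eq_integral_exp_smul, smul_eq_mul]
  congr! 4 with x
  push_cast
  ring

lemma FT_zero (ξ : ℝ) : FT 0 ξ = 0 := by
  simp [FT]

lemma FT_congr_ae (h : f =ᵐ[volume] g) : FT f = FT g := by
  ext ξ
  exact integral_congr_ae (h.mono fun x hx => congrArg (_ * ·) hx)

lemma FT_mul_convolution (hf : Integrable f) (hg : Integrable g) (ξ : ℝ) :
    FT (f ⋆[ContinuousLinearMap.mul ℂ ℂ] g) ξ = FT f ξ * FT g ξ := by
  simpa only [FT_eq_fourier] using Real.fourier_mul_convolution_eq hf hg _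

lemma exists_integrable_FT_eq (u : 𝓢(ℝ, ℂ)) : ∃ g : ℝ → ℂ, Integrable g ∧ FT g = u := by
  let scaling : ℝ ≃L[ℝ] ℝ :=
    ContinuousLinearEquiv.unitsEquivAut ℝ (Units.mk0 (-2) (by norm_num))
  let v : 𝓢(ℝ, ℂ) := SchwartzMap.compCLMOfContinuousLinearEquiv ℂ scaling u
  refine ⟨(𝓕⁻ v : 𝓢(ℝ, ℂ)), SchwartzMap.integrable _, funext fun ξ => ?_⟩
  have hv : v (-ξ / 2) = u ξ := congrArg u (show -ξ / 2 * (-2) = ξ by ring)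
  rw [FT_eq_fourier, ← SchwartzMap.fourier_coe, FourierTransform.fourier_fourierInv_eq, hv]

lemma exists_FT_eq_one_support_subset {U : Set ℝ} {ξ₀ : ℝ} (hU : U ∈ 𝓝 ξ₀) :
    ∃ g : ℝ → ℂ, Integrable g ∧ FT g ξ₀ = 1 ∧ Function.support (FT g) ⊆ U := by
  obtain ⟨u, hu_supp, hu_compact, hu_smooth, -, hu_one⟩ :=
    exists_contDiff_tsupport_subset (n := ⊤) hU
  have hc : HasCompactSupport fun ξ => (u ξ : ℂ) := hu_compact.comp_left Complex.ofReal_zero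
  obtain ⟨g, hg, hgu⟩ := exists_integrable_FT_eq
    (hc.toSchwartzMap (Complex.ofRealCLM.contDiff.comp hu_smooth))
  have hFT (ξ : ℝ) : FT g ξ = u ξ := congrFun hgu ξ
  refine ⟨g, hg, by rw [hFT, hu_one, Complex.ofReal_one], fun ξ hξ => hu_supp ?_⟩
  refine subset_tsupport u fun h => hξ ?_
  rw [hFT, h, Complex.ofReal_zero]

end FourierTransform

section UniquenessPairs

variable {Λ : Set (ℝ × ℝ)} {m n d : ℕ} {ξ₀ : ℝ}

lemma IsHUP.of_le (h : IsHUP n Λ) (hmn : m ≤ n) : IsHUP m Λ := by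
  obtain ⟨e, rfl⟩ := Nat.exists_eq_add_of_le hmn
  intro f hf hΛ i
  have hf_ext : ∀ j, Integrable (Fin.append f (0 : Fin e → ℝ → ℂ) j) :=
    Fin.addCases (by simpa using hf) (by simp)
  have hΛ_ext (ξ η : ℝ) (hξη : (ξ, η) ∈ Λ) :
      ∑ j : Fin (m + e), cexpEta η ^ (j : ℕ) * FT (Fin.append f (0 : Fin e → ℝ → ℂ) j) ξ = 0 := by
    simpa [Fin.sum_univ_add, FT_zero] using hΛ ξ η hξη
  simpa only [Fin.append_left] using h _ hf_ext hΛ_ext (Fin.castAdd e i)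

/-- For all `(ξ, η)` in `Λ` with `ξ` near `ξ₀`, the number `e^{πiη}` is a root of a monic polynomial
of degree `d` whose lower coefficients are `φ̂_i(ξ)` for fixed `φ_i ∈ L¹(ℝ)`. This is the common
form of the relations in `Pmem` and `projStarNe`, imposed on `Λ` itself and not only on `Π^k(Λ)`
and `Img`. -/
def HasMonicRelationNear (Λ : Set (ℝ × ℝ)) (d : ℕ) (ξ₀ : ℝ) : Prop :=
  ∃ φ : Fin d → ℝ → ℂ, (∀ i, Integrable (φ i)) ∧
    ∀ᶠ ξ in 𝓝 ξ₀, ∀ η, (ξ, η) ∈ Λ →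
      (∑ i : Fin d, FT (φ i) ξ * cexpEta η ^ (i : ℕ)) + cexpEta η ^ d = 0

lemma HasMonicRelationNear.not_isHUP_succ (h : HasMonicRelationNear Λ d ξ₀) :
    ¬ IsHUP (d + 1) Λ := by
  obtain ⟨φ, hφ, hrel⟩ := h
  obtain ⟨g, hg, hg_one, hg_supp⟩ := exists_FT_eq_one_support_subset hrel
  let φg : Fin d → ℝ → ℂ := fun i => φ i ⋆[ContinuousLinearMap.mul ℂ ℂ] g
  let f : Fin (d + 1) → ℝ → ℂ := Fin.snoc φg g
  have hf : ∀ i, Integrable (f i) :=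
    Fin.lastCases (by simpa [f] using hg)
      fun i => by simpa [f] using (hφ i).integrable_convolution _ hg
  have hsum (ξ η : ℝ) : ∑ i : Fin (d + 1), cexpEta η ^ (i : ℕ) * FT (f i) ξ =
      ((∑ i : Fin d, FT (φ i) ξ * cexpEta η ^ (i : ℕ)) + cexpEta η ^ d) * FT g ξ := by
    simp only [f, φg, Fin.sum_univ_castSucc, Fin.snoc_castSucc, Fin.snoc_last, Fin.val_castSucc,
      Fin.val_last, FT_mul_convolution (hφ _) hg, add_mul, Finset.sum_mul]
    congr! 2 with i
    ring
  have hvanish (ξ η : ℝ) (hξη : (ξ, η) ∈ Λ) :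
      ∑ i : Fin (d + 1), cexpEta η ^ (i : ℕ) * FT (f i) ξ = 0 := by
    rw [hsum]
    by_cases hξ : FT g ξ = 0
    · rw [hξ, mul_zero]
    · rw [hg_supp hξ η hξη, zero_mul]
  intro hHUP
  have hg_zero : g =ᵐ[volume] 0 := by
    simpa only [f, Fin.snoc_last] using hHUP f hf hvanish (Fin.last d)
  exact one_ne_zero (by rw [← hg_one, FT_congr_ae hg_zero, FT_zero])

lemma HasMonicRelationNear.not_isHUP (h : HasMonicRelationNear Λ d ξ₀) (hdn : d < n) :
    ¬ IsHUP n Λ :=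
  fun hHUP => h.not_isHUP_succ (hHUP.of_le hdn)

end UniquenessPairs

section StarredPoints

variable {Λ : Set (ℝ × ℝ)} {n k d : ℕ} {ξ₀ : ℝ}

lemma cexpEta_periodic : Function.Periodic cexpEta 2 := fun η =>
  Complex.exp_eq_exp_iff_exists_int.2 ⟨1, by push_cast; ring⟩

lemma Periodic2.exists_mem_Img (hper : Periodic2 Λ) {ξ η : ℝ} (h : (ξ, η) ∈ Λ) :
    ∃ η' ∈ Img Λ ξ, cexpEta η = cexpEta η' := by
  have hpair : Function.Periodic (fun t => ((ξ, t) ∈ Λ, cexpEta t)) 2 := fun t =>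
    Prod.ext (propext (hper ξ t).symm) (cexpEta_periodic t)
  obtain ⟨η', hη', heq⟩ := hpair.exists_mem_Ico₀ two_pos η
  obtain ⟨hmem, hexp⟩ := Prod.ext_iff.1 heq
  exact ⟨η', ⟨hη', hmem.mp h⟩, hexp⟩

lemma HasMonicRelationNear.of_Img (hper : Periodic2 Λ) {E : Set ℝ}
    (hE : ∀ᶠ ξ in 𝓝 ξ₀, ξ ∈ proj Λ → ξ ∈ E) {φ : Fin d → ℝ → ℂ} (hφ : ∀ i, Integrable (φ i))
    (hrel : ∀ᶠ ξ in 𝓝 ξ₀, ξ ∈ E → ∀ η ∈ Img Λ ξ,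
      (∑ i : Fin d, FT (φ i) ξ * cexpEta η ^ (i : ℕ)) + cexpEta η ^ d = 0) :
    HasMonicRelationNear Λ d ξ₀ := by
  refine ⟨φ, hφ, ?_⟩
  filter_upwards [hE, hrel] with ξ hξE hξrel η hη
  obtain ⟨η', hη', hexp⟩ := hper.exists_mem_Img hη
  rw [hexp]
  exact hξrel (hξE ⟨η, hη⟩) η' hη'

lemma hasMonicRelationNear_of_mem_projOneStar (hper : Periodic2 Λ) (hξ₀ : ξ₀ ∈ projOneStar Λ n)
    (hE : ∀ᶠ ξ in 𝓝 ξ₀, ξ ∈ proj Λ → ξ ∈ projExact Λ 1) :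
    HasMonicRelationNear Λ (n - 1) ξ₀ := by
  obtain ⟨-, χ, hχ, a, b, hab, φ, hφ, hrel⟩ := hξ₀
  refine .of_Img hper hE hφ ?_
  filter_upwards [Ioo_mem_nhds hab.1 hab.2] with ξ hξ hξE η hη
  rw [← hχ ξ hξE η hη]
  exact hrel ξ ⟨hξ, hξE⟩

lemma hasMonicRelationNear_of_mem_projStarNe (hper : Periodic2 Λ) (hξ₀ : ξ₀ ∈ projStarNe Λ k)
    (hE : ∀ᶠ ξ in 𝓝 ξ₀, ξ ∈ proj Λ → ξ ∈ projExact Λ k) :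
    HasMonicRelationNear Λ k ξ₀ := by
  obtain ⟨-, a, b, hab, φ, hφ, hrel⟩ := hξ₀
  refine .of_Img hper hE hφ ?_
  filter_upwards [Ioo_mem_nhds hab.1 hab.2] with ξ hξ hξE η hη
  exact eq_neg_iff_add_eq_zero.1 (hrel ξ ⟨hξ, hξE⟩ η hη)

lemma exists_hasMonicRelationNear (hper : Periodic2 Λ) (hkn : k < n)
    (hξ₀ : ξ₀ ∈ projStarNeGen Λ n k) (hE : ∀ᶠ ξ in 𝓝 ξ₀, ξ ∈ proj Λ → ξ ∈ projExact Λ k) :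
    ∃ d < n, HasMonicRelationNear Λ d ξ₀ := by
  unfold projStarNeGen at hξ₀
  split_ifs at hξ₀ with hk
  · subst hk
    exact ⟨n - 1, by omega, hasMonicRelationNear_of_mem_projOneStar hper hξ₀ hE⟩
  · exact ⟨k, hkn, hasMonicRelationNear_of_mem_projStarNe hper hξ₀ hE⟩

lemma projStarNeGen_subset_projExact : projStarNeGen Λ n k ⊆ projExact Λ k := by
  intro ξ hξ
  unfold projStarNeGen at hξ
  split_ifs at hξ with hk
  · exact hk ▸ hξ.1
  · exact hξ.1

end StarredPoints

theorem no_interval_in_single_star_general {n k : ℕ} (hkn : k < n) {Λ : Set (ℝ × ℝ)}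
    (hper : Periodic2 Λ) (hHUP : IsHUP n Λ) :
    projStarNeGen Λ n k ⊆ closure (proj Λ \ projExact Λ k) := by
  intro ξ₀ hξ₀
  by_contra hcl
  have hE : ∀ᶠ ξ in 𝓝 ξ₀, ξ ∈ proj Λ → ξ ∈ projExact Λ k := by
    simpa [mem_closure_iff_frequently] using hcl
  obtain ⟨d, hdn, hrel⟩ := exists_hasMonicRelationNear hper hkn hξ₀ hE
  exact hrel.not_isHUP hdn hHUP

theorem no_interval_in_single_star (n : ℕ) (hn : 2 ≤ n) (Λ : Set (ℝ × ℝ))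
    (hclosed : IsClosed Λ) (hper : Periodic2 Λ) (hHUP : IsHUP n Λ) :
    ∀ k : ℕ, 1 ≤ k → k ≤ n - 1 →
      ¬ ∃ a b : ℝ, a < b ∧ (proj Λ ∩ Set.Ioo a b).Nonempty ∧
        proj Λ ∩ Set.Ioo a b ⊆ projStarNeGen Λ n k := by
  rintro k - hkn ⟨a, b, -, ⟨ξ₀, hξ₀, hξ₀J⟩, hsub⟩
  obtain ⟨ξ, hξJ, hξ, hξk⟩ := mem_closure_iff.1
    (no_interval_in_single_star_general (by omega) hper hHUP (hsub ⟨hξ₀, hξ₀J⟩)) _ isOpen_Ioo hξ₀J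
  exact hξk (projStarNeGen_subset_projExact (hsub ⟨hξ, hξJ⟩))
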